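/- arXiv:math/0305371 — 2 statements merged into one kernel-verified Lean document; each statement's English description precedes it below -/
import Mathlib

section
/- Let (E,φ) be a finitely aligned product system of graphs over ℕ^k such that s_{e_i}⁻¹(v) is infinite for every v ∈ E⁰ and every 1 ≤ i ≤ k. Then for every v ∈ E⁰ and every choice of finite sets G_m ⊆ s_{e_m}⁻¹(v) (1 ≤ m ≤ k) there exists μ ∈ E¹ with d(μ) = e_1 + ⋯ + e_k, s(μ) = v, and μ(0,e_i) ∉ G_i for every 1 ≤ i ≤ k; consequently MCE(λ,μ) = ∅ for every λ ∈ ⋃_{m=1}^k G_m. -/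
open scoped Classical

noncomputable section

namespace PSG

variable {G : Type*} [Group G] {Λ : Type*}

/-- `g ≤ h` in the left-invariant partial order induced by the submonoid `P`. -/
def qle (P : Submonoid G) (g h : G) : Prop := g⁻¹ * h ∈ P

/-- `r` is a common upper bound of `p` and `q` in `P`. -/
def IsUB (P : Submonoid G) (p q r : G) : Prop := r ∈ P ∧ qle P p r ∧ qle P q r

/-- `r` is the least common upper bound of `p` and `q` in `P`. -/
def IsLUB2 (P : Submonoid G) (p q r : G) : Prop :=
  IsUB P p q r ∧ ∀ r', IsUB P p q r' → qle P r r'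

/-- `r` is the least upper bound in `P` of the set of degrees `D`. -/
def IsLUBFam (P : Submonoid G) (D : Set G) (r : G) : Prop :=
  r ∈ P ∧ (∀ p ∈ D, qle P p r) ∧ ∀ r' ∈ P, (∀ p ∈ D, qle P p r') → qle P r r'

/-- `(G, P)` is quasi-lattice ordered: `P ∩ P⁻¹ = {1}` and every pair of elements of `P`
with a common upper bound in `P` has a least upper bound in `P`. -/
def QuasiLatticeOrdered (P : Submonoid G) : Prop :=
  (∀ g ∈ P, g⁻¹ ∈ P → g = 1) ∧
    ∀ p ∈ P, ∀ q ∈ P, (∃ r, IsUB P p q r) → ∃ r, IsLUB2 P p q r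

/-- A product system of graphs over `P`, encoded on a single edge set `Λ` (which contains the
vertices as the elements of degree `1`), with degree map `d`, source and range maps `src`, `rng`
(valued in vertices), and partial multiplication `mul` (meaningful when `rng a = src b`). -/
structure IsProductSystem (P : Submonoid G) (d : Λ → G) (src rng : Λ → Λ)
    (mul : Λ → Λ → Λ) : Prop where
  countable : Countable Λ
  d_mem : ∀ a, d a ∈ P
  d_src : ∀ a, d (src a) = 1
  d_rng : ∀ a, d (rng a) = 1
  src_vertex : ∀ v, d v = 1 → src v = v
  rng_vertex : ∀ v, d v = 1 → rng v = v
  d_mul : ∀ a b, rng a = src b → d (mul a b) = d a * d b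
  src_mul : ∀ a b, rng a = src b → src (mul a b) = src a
  rng_mul : ∀ a b, rng a = src b → rng (mul a b) = rng b
  mul_assoc' : ∀ a b c, rng a = src b → rng b = src c →
    mul (mul a b) c = mul a (mul b c)
  src_mul_self : ∀ a, mul (src a) a = a
  mul_rng_self : ∀ a, mul a (rng a) = a
  factor : ∀ p q : G, p ∈ P → q ∈ P → ∀ c, d c = p * q →
    ∃! ab : Λ × Λ, d ab.1 = p ∧ d ab.2 = q ∧ rng ab.1 = src ab.2 ∧ mul ab.1 ab.2 = c

/-- `a` is an initial segment of `c`: `c = a • b` for some (necessarily unique) `b`. -/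
def IsInit (src rng : Λ → Λ) (mul : Λ → Λ → Λ) (a c : Λ) : Prop :=
  ∃ b, rng a = src b ∧ mul a b = c

/-- The set of minimal common extensions of `μ` and `ν`. -/
def MCE (P : Submonoid G) (d : Λ → G) (src rng : Λ → Λ) (mul : Λ → Λ → Λ)
    (μ ν : Λ) : Set Λ :=
  {γ | IsInit src rng mul μ γ ∧ IsInit src rng mul ν γ ∧ IsLUB2 P (d μ) (d ν) (d γ)}

/-- The product system is finitely aligned. -/
def FinitelyAligned (P : Submonoid G) (d : Λ → G) (src rng : Λ → Λ)
    (mul : Λ → Λ → Λ) : Prop :=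
  ∀ μ ν : Λ, (MCE P d src rng mul μ ν).Finite

/-- The set of minimal common extensions of a set `S` of edges. -/
def MCEset (P : Submonoid G) (d : Λ → G) (src rng : Λ → Λ) (mul : Λ → Λ → Λ)
    (S : Set Λ) : Set Λ :=
  {γ | (∀ α ∈ S, IsInit src rng mul α γ) ∧ IsLUBFam P (d '' S) (d γ)}

/-- `∨F`: the union of `MCE(S)` over the nonempty subsets `S ⊆ F`. -/
def vee (P : Submonoid G) (d : Λ → G) (src rng : Λ → Λ) (mul : Λ → Λ → Λ)
    (F : Finset Λ) : Set Λ :=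
  {γ | ∃ S : Finset Λ, S.Nonempty ∧ S ⊆ F ∧ γ ∈ MCEset P d src rng mul ↑S}

/-- Given that `a` is an initial segment of `c`, the (unique) complementary segment;
junk value `c` otherwise. -/
def tail (src rng : Λ → Λ) (mul : Λ → Λ → Λ) (a c : Λ) : Λ :=
  if h : IsInit src rng mul a c then h.choose else c

section CstarFamilies

variable (P : Submonoid G) (d : Λ → G) (src rng : Λ → Λ) (mul : Λ → Λ → Λ)
variable {B : Type*} [CStarAlgebra B] [PartialOrder B] [StarOrderedRing B]

/-- A Toeplitz `E`-family in a C*-algebra `B` (conditions (1)–(4)). -/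
structure IsToeplitzFamily (t : Λ → B) : Prop where
  vertex_sa : ∀ v, d v = 1 → IsSelfAdjoint (t v)
  vertex_idem : ∀ v, d v = 1 → t v * t v = t v
  vertex_orth : ∀ v w, d v = 1 → d w = 1 → v ≠ w → t v * t w = 0
  mul_eq : ∀ a b, rng a = src b → t a * t b = t (mul a b)
  star_mul_self : ∀ a, star (t a) * t a = t (rng a)
  dom : ∀ p : G, p ∈ P → p ≠ 1 → ∀ v, d v = 1 → ∀ F : Finset Λ,
    (∀ a ∈ F, d a = p ∧ src a = v) → (∑ a ∈ F, t a * star (t a)) ≤ t v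

/-- The Nica-covariance/Cuntz–Krieger relation (5):
`tμ* tν = ∑_{γ = μα = νβ ∈ MCE(μ,ν)} tα tβ*`. -/
def TCKrel (t : Λ → B) : Prop :=
  ∀ μ ν : Λ, ∀ M : Finset Λ, ↑M = MCE P d src rng mul μ ν →
    star (t μ) * t ν =
      ∑ γ ∈ M, t (tail src rng mul μ γ) * star (t (tail src rng mul ν γ))

/-- A Toeplitz–Cuntz–Krieger `E`-family: conditions (1)–(5). -/
def IsTCKFamily (t : Λ → B) : Prop :=
  IsToeplitzFamily P d src rng mul t ∧ TCKrel P d src rng mul t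

/-- Condition (†): for every finite `R ⊆ P∖{1}`, every vertex `v`, and all finite sets
`F_p ⊆ s_p⁻¹(v)` (`p ∈ R`), the product `∏_{p ∈ R} (t_v − ∑_{a ∈ F_p} t_a t_a*)` is nonzero.
(The factors commute, so the product is stated for an arbitrary enumeration of `R`.) -/
def Dagger (t : Λ → B) : Prop :=
  ∀ R : List G, R.Nodup → (∀ p ∈ R, p ∈ P ∧ p ≠ 1) →
    ∀ v, d v = 1 → ∀ Fp : G → Finset Λ,
      (∀ p ∈ R, ∀ a ∈ Fp p, d a = p ∧ src a = v) →
        (R.map fun p => t v - ∑ a ∈ Fp p, t a * star (t a)).prod ≠ 0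

/-- The projection `Q^{∨F}_l = t_l t_l* ∏_{l α ∈ ∨F, d α ≠ 1} (t_{s(l)} − t_{lα} t_{lα}*)`.
(The factors commute, so the product is computed over an arbitrary enumeration.) -/
def Qproj (t : Λ → B) (F : Finset Λ) (l : Λ) : B :=
  if h : {α : Λ | d α ≠ 1 ∧ rng l = src α ∧ mul l α ∈ vee P d src rng mul F}.Finite then
    t l * star (t l) *
      (h.toFinset.toList.map fun α =>
        t (src l) - t (mul l α) * star (t (mul l α))).prod
  else 0

end CstarFamilies

/-- The positive cone `ℕ^k` inside `ℤ^k` (written multiplicatively). -/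
def posCone (k : ℕ) : Submonoid (Multiplicative (Fin k → ℤ)) where
  carrier := {g | ∀ i, 0 ≤ Multiplicative.toAdd g i}
  mul_mem' := by
    intro a b ha hb i
    simpa using add_nonneg (ha i) (hb i)
  one_mem' := by
    intro i
    simp

/-- The `i`-th standard generator of `ℕ^k ⊆ ℤ^k`. -/
def egen (k : ℕ) (i : Fin k) : Multiplicative (Fin k → ℤ) :=
  Multiplicative.ofAdd (Pi.single i 1)

end PSG
namespace PSG

section Helpers

variable {G : Type*} [Group G] {Λ : Type*} {P : Submonoid G} {d : Λ → G} {src rng : Λ → Λ}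
  {mul : Λ → Λ → Λ}

/-- Two factorisations of the same edge with equal initial degrees coincide. -/
lemma IsProductSystem.factor_unique (h : IsProductSystem P d src rng mul) {a b a' b' : Λ}
    (hab : rng a = src b) (hab' : rng a' = src b') (hd : d a = d a')
    (he : mul a b = mul a' b') : a = a' ∧ b = b' := by
  have hdb : d b = d b' := by
    have := congrArg d he
    rw [h.d_mul _ _ hab, h.d_mul _ _ hab', hd] at this
    exact mul_left_cancel this
  have hu := (h.factor (d a) (d b) (h.d_mem a) (h.d_mem b) (mul a b) (h.d_mul _ _ hab)).unique
    (y₁ := (a, b)) (y₂ := (a', b')) ⟨rfl, rfl, hab, rfl⟩ ⟨hd.symm, hdb.symm, hab', he.symm⟩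
  exact ⟨congrArg Prod.fst hu, congrArg Prod.snd hu⟩

/-- An initial segment of `μa` whose degree is at most that of `μ` is an initial segment
of `μ`. -/
lemma IsProductSystem.isInit_of_isInit_mul (h : IsProductSystem P d src rng mul) {l μ a : Λ}
    (hμa : rng μ = src a) (hle : qle P (d l) (d μ)) (hl : IsInit src rng mul l (mul μ a)) :
    IsInit src rng mul l μ := by
  obtain ⟨b, hlb, hb⟩ := hl
  obtain ⟨⟨α, β⟩, ⟨hα, -, hαβ, hmul⟩, -⟩ :=
    h.factor (d l) ((d l)⁻¹ * d μ) (h.d_mem l) hle μ (by group)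
  simp only at hα hαβ hmul
  have hβa : rng β = src a := by rw [← hμa, ← hmul, h.rng_mul _ _ hαβ]
  have hαl : α = l := by
    refine (h.factor_unique (b := mul β a) ?_ hlb hα ?_).1
    · rw [h.src_mul _ _ hβa, hαβ]
    · rw [hb, ← h.mul_assoc' _ _ _ hαβ hβa, hmul]
  exact ⟨β, hαl ▸ hαβ, hαl ▸ hmul⟩

end Helpers

lemma toAdd_prod_egen_apply {k : ℕ} (S : Finset (Fin k)) (i : Fin k) :
    Multiplicative.toAdd (∏ j ∈ S, egen k j) i = if i ∈ S then 1 else 0 := by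
  simp [egen, toAdd_prod, Finset.sum_apply, Pi.single_apply]

lemma qle_posCone_iff {k : ℕ} {g h : Multiplicative (Fin k → ℤ)} :
    qle (posCone k) g h ↔ ∀ i, Multiplicative.toAdd g i ≤ Multiplicative.toAdd h i := by
  refine forall_congr' fun i => ?_
  simp

lemma qle_egen_prod {k : ℕ} {S : Finset (Fin k)} {j : Fin k} (hj : j ∈ S) :
    qle (posCone k) (egen k j) (∏ i ∈ S, egen k i) := by
  rw [qle_posCone_iff]
  intro i
  rw [toAdd_prod_egen_apply]
  rcases eq_or_ne i j with rfl | hij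
  · simp [egen, hj]
  · simp only [egen, toAdd_ofAdd, Pi.single_eq_of_ne hij]
    split_ifs <;> simp

lemma isLUB2_egen_prod {k : ℕ} {S : Finset (Fin k)} {j : Fin k} (hj : j ∉ S) :
    IsLUB2 (posCone k) (egen k j) (∏ i ∈ S, egen k i) (∏ i ∈ insert j S, egen k i) := by
  refine ⟨⟨fun i => ?_, qle_egen_prod (Finset.mem_insert_self j S), ?_⟩, ?_⟩
  · rw [toAdd_prod_egen_apply]
    split_ifs <;> simp
  · rw [qle_posCone_iff]
    intro i
    rw [toAdd_prod_egen_apply, toAdd_prod_egen_apply]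
    by_cases hi : i ∈ S
    · simp [hi]
    · simp only [hi, if_false]
      split_ifs <;> simp
  · rintro r ⟨-, hjr, hSr⟩
    rw [qle_posCone_iff] at *
    intro i
    have hi := hSr i
    rw [toAdd_prod_egen_apply] at hi ⊢
    rcases eq_or_ne i j with rfl | hij
    · simpa [egen] using hjr i
    · simpa [hij] using hi

/-- A path of degree `∑_{i ∈ S} e_i` from `v` with no initial segment in any `Gm i`, `i ∈ S`. -/
lemma exists_path_avoiding {k : ℕ} {Λ : Type*}
    {d : Λ → Multiplicative (Fin k → ℤ)} {src rng : Λ → Λ} {mul : Λ → Λ → Λ}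
    (hPS : IsProductSystem (posCone k) d src rng mul)
    (hFA : FinitelyAligned (posCone k) d src rng mul)
    (hinf : ∀ v, d v = 1 → ∀ i : Fin k,
      {a : Λ | d a = egen k i ∧ src a = v}.Infinite)
    {v : Λ} (hv : d v = 1) {Gm : Fin k → Finset Λ}
    (hGm : ∀ m : Fin k, ∀ a ∈ Gm m, d a = egen k m) (S : Finset (Fin k)) :
    ∃ μ : Λ, d μ = (∏ i ∈ S, egen k i) ∧ src μ = v ∧
      ∀ i ∈ S, ∀ l ∈ Gm i, ¬ IsInit src rng mul l μ := by
  induction S using Finset.induction_on with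
  | empty => exact ⟨v, by simpa using hv, hPS.src_vertex v hv, by simp⟩
  | insert j S hj ih =>
    obtain ⟨μ, hdμ, hsμ, hμ⟩ := ih
    have hbad : {a : Λ | rng μ = src a ∧
        mul μ a ∈ ⋃ l ∈ Gm j, MCE (posCone k) d src rng mul l μ}.Finite := by
      refine Set.Finite.of_finite_image (f := mul μ) ?_ ?_
      · refine ((Gm j).finite_toSet.biUnion fun l _ => hFA l μ).subset ?_
        rintro _ ⟨a, ha, rfl⟩
        exact ha.2
      · intro a ha b hb hab
        exact (hPS.factor_unique ha.1 hb.1 rfl hab).2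
    obtain ⟨a, ⟨hda, hsa⟩, hna⟩ := (hinf (rng μ) (hPS.d_rng μ) j).exists_notMem_finite hbad
    have hd : d (mul μ a) = ∏ i ∈ insert j S, egen k i := by
      rw [hPS.d_mul _ _ hsa.symm, hdμ, hda, Finset.prod_insert hj, mul_comm]
    refine ⟨mul μ a, hd, by rw [hPS.src_mul _ _ hsa.symm, hsμ], fun i hi l hl hinit => ?_⟩
    rcases Finset.mem_insert.mp hi with rfl | hiS
    · refine hna ⟨hsa.symm, Set.mem_biUnion hl ⟨hinit, ⟨a, hsa.symm, rfl⟩, ?_⟩⟩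
      rw [hd, hdμ, hGm i l hl]
      exact isLUB2_egen_prod hj
    · refine hμ i hiS l hl (hPS.isInit_of_isInit_mul hsa.symm ?_ hinit)
      rw [hGm i l hl, hdμ]
      exact qle_egen_prod hiS

/-- The path-construction from the proof of the Corollary in §8: if every vertex receives
infinitely many edges of each degree `e_i`, then for all finite `G_m ⊆ s_{e_m}⁻¹(v)` there is
a path `μ` of degree `e_1 + ⋯ + e_k` with source `v` avoiding every `G_i` in its initial
segments; consequently `MCE(λ,μ) = ∅` for every `λ ∈ ⋃_m G_m`. -/
theorem stmt15 {k : ℕ} {Λ : Type*}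
    (d : Λ → Multiplicative (Fin k → ℤ)) (src rng : Λ → Λ) (mul : Λ → Λ → Λ)
    (hPS : IsProductSystem (posCone k) d src rng mul)
    (hFA : FinitelyAligned (posCone k) d src rng mul)
    (hinf : ∀ v, d v = 1 → ∀ i : Fin k,
      {a : Λ | d a = egen k i ∧ src a = v}.Infinite)
    (v : Λ) (hv : d v = 1) (Gm : Fin k → Finset Λ)
    (hGm : ∀ m : Fin k, ∀ a ∈ Gm m, d a = egen k m ∧ src a = v) :
    ∃ μ : Λ, d μ = (∏ i : Fin k, egen k i) ∧ src μ = v ∧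
      (∀ i : Fin k, ∀ α β : Λ, d α = egen k i → rng α = src β →
        mul α β = μ → α ∉ Gm i) ∧
      (∀ i : Fin k, ∀ l ∈ Gm i, MCE (posCone k) d src rng mul l μ = ∅) := by
  obtain ⟨μ, hdμ, hsμ, hμ⟩ :=
    exists_path_avoiding hPS hFA hinf hv (fun m a ha => (hGm m a ha).1) Finset.univ
  refine ⟨μ, hdμ, hsμ, fun i α β _ hαβ hmul hα =>
    hμ i (Finset.mem_univ i) α hα ⟨β, hαβ, hmul⟩, fun i l hl => ?_⟩
  refine Set.eq_empty_of_forall_notMem ?_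
  rintro γ ⟨hlγ, ⟨b, hb, rfl⟩, -⟩
  refine hμ i (Finset.mem_univ i) l hl (hPS.isInit_of_isInit_mul hb ?_ hlγ)
  rw [(hGm i l hl).1, hdμ]
  exact qle_egen_prod (Finset.mem_univ i)

end PSG
end
end

section
/- Let (E,φ) be a finitely aligned product system of graphs over ℕ^k such that s_{e_i}⁻¹(v) is infinite for every v ∈ E⁰ and every 1 ≤ i ≤ k. Let {t_λ : λ ∈ E¹} be a Toeplitz–Cuntz–Krieger E-family in a C*-algebra B with t_v ≠ 0 for every v ∈ E⁰. Then for every v ∈ E⁰ and every choice of finite sets G_m ⊆ s_{e_m}⁻¹(v) (1 ≤ m ≤ k), the element ∏_{m=1}^k (t_v − ∑_{λ∈G_m} t_λ t_λ*) of B is nonzero; in particular {t_λ} satisfies condition (†). -/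
open scoped Classical

noncomputable section

namespace PSG

section ProductSystem

variable {k : ℕ} {Λ : Type*} {d : Λ → Multiplicative (Fin k → ℤ)} {src rng : Λ → Λ}
  {mul : Λ → Λ → Λ}

theorem egen_mem_posCone (i : Fin k) : egen k i ∈ posCone k := by
  intro j
  by_cases h : j = i
  · subst h; simp [egen]
  · simp [egen, h]

/-- An element of `ℕ^k` whose `i`-th coordinate is positive dominates the `i`-th generator. -/
theorem egen_inv_mul_mem_posCone {g : Multiplicative (Fin k → ℤ)} (hg : g ∈ posCone k) {i : Fin k}
    (hi : 1 ≤ Multiplicative.toAdd g i) : (egen k i)⁻¹ * g ∈ posCone k := by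
  intro j
  by_cases h : j = i
  · subst h; simp [egen]; omega
  · simpa [egen, h] using hg j

theorem exists_one_le_of_ne_one {g : Multiplicative (Fin k → ℤ)} (hg : g ∈ posCone k)
    (h1 : g ≠ 1) : ∃ i, 1 ≤ Multiplicative.toAdd g i := by
  by_contra! h
  refine h1 (Multiplicative.toAdd.injective (funext fun i => ?_))
  have h0 := hg i
  have h2 := h i
  simp only [toAdd_one, Pi.zero_apply]
  omega

/-- `p + e_i` is the least upper bound of `p` and `e_i` when the `i`-th coordinate of `p`
vanishes. -/
theorem isLUB2_mul_egen {p : Multiplicative (Fin k → ℤ)} (hp : p ∈ posCone k) {i : Fin k}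
    (hi : Multiplicative.toAdd p i = 0) : IsLUB2 (posCone k) p (egen k i) (p * egen k i) := by
  refine ⟨⟨mul_mem hp (egen_mem_posCone i), ?_, ?_⟩, ?_⟩
  · simpa [qle] using egen_mem_posCone i
  · simpa [qle, mul_comm p] using hp
  · rintro r ⟨-, h1, h2⟩ j
    have h1 := h1 j
    have h2 := h2 j
    by_cases h : j = i
    · subst h
      simp [egen, hi] at h2 ⊢
      omega
    · simpa [egen, h] using h1

theorem IsProductSystem.mul_left_cancel {P : Submonoid (Multiplicative (Fin k → ℤ))}
    (hPS : IsProductSystem P d src rng mul) {a b a' b' : Λ}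
    (hd : d a = d a') (hab : rng a = src b) (hab' : rng a' = src b')
    (h : mul a b = mul a' b') : a = a' ∧ b = b' := by
  have hdb : d b = d b' := by
    have := congrArg d h
    rw [hPS.d_mul _ _ hab, hPS.d_mul _ _ hab', hd] at this
    exact _root_.mul_left_cancel this
  have := (hPS.factor _ _ (hPS.d_mem a) (hPS.d_mem b) _ (hPS.d_mul _ _ hab)).unique
    (y₁ := (a, b)) (y₂ := (a', b')) ⟨rfl, rfl, hab, rfl⟩ ⟨hd.symm, hdb.symm, hab', h.symm⟩
  exact Prod.mk.inj this

theorem IsProductSystem.isInit_trans {P : Submonoid (Multiplicative (Fin k → ℤ))}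
    (hPS : IsProductSystem P d src rng mul) {a b c : Λ}
    (hab : IsInit src rng mul a b) (hbc : IsInit src rng mul b c) : IsInit src rng mul a c := by
  obtain ⟨x, hx, rfl⟩ := hab
  obtain ⟨y, hy, rfl⟩ := hbc
  rw [hPS.rng_mul _ _ hx] at hy
  exact ⟨mul x y, by rw [hPS.src_mul _ _ hy, hx], (hPS.mul_assoc' _ _ _ hx hy).symm⟩

theorem IsProductSystem.eq_of_isInit {P : Submonoid (Multiplicative (Fin k → ℤ))}
    (hPS : IsProductSystem P d src rng mul) {a a' c : Λ} (hd : d a = d a')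
    (ha : IsInit src rng mul a c) (ha' : IsInit src rng mul a' c) : a = a' := by
  obtain ⟨x, hx, rfl⟩ := ha
  obtain ⟨y, hy, h⟩ := ha'
  exact (hPS.mul_left_cancel hd hx hy h.symm).1

/-- An edge whose degree has positive `i`-th coordinate starts with an edge of degree `e_i`. -/
theorem IsProductSystem.exists_isInit_egen (hPS : IsProductSystem (posCone k) d src rng mul)
    {c : Λ} {i : Fin k} (hi : 1 ≤ Multiplicative.toAdd (d c) i) :
    ∃ a, d a = egen k i ∧ IsInit src rng mul a c := by
  obtain ⟨⟨a, b⟩, ⟨h1, -, h3, h4⟩, -⟩ := hPS.factor _ _ (egen_mem_posCone i)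
    (egen_inv_mul_mem_posCone (hPS.d_mem c) hi) c (by simp)
  exact ⟨a, h1, b, h3, h4⟩

/-- If every vertex emits infinitely many edges of degree `e_i`, then an edge `μ` with
`d(μ)_i = 0` can be extended by an edge of degree `e_i` so that the extension has no common
extension with any member of a given finite set of edges of degree `e_i`. -/
theorem IsProductSystem.exists_extension_avoiding
    (hPS : IsProductSystem (posCone k) d src rng mul)
    (hFA : FinitelyAligned (posCone k) d src rng mul) {i : Fin k}
    (hinf : ∀ v, d v = 1 → {a : Λ | d a = egen k i ∧ src a = v}.Infinite)
    {μ : Λ} (hμ : Multiplicative.toAdd (d μ) i = 0) (A : Finset Λ) (hA : ∀ a ∈ A, d a = egen k i) :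
    ∃ ν, d ν = egen k i ∧ rng μ = src ν ∧
      ∀ a ∈ A, ∀ γ, IsInit src rng mul (mul μ ν) γ → ¬ IsInit src rng mul a γ := by
  have hfin : (⋃ a ∈ A, MCE (posCone k) d src rng mul μ a).Finite :=
    A.finite_toSet.biUnion fun a _ => hFA μ a
  have hinj : Set.InjOn (mul μ) {ν : Λ | d ν = egen k i ∧ src ν = rng μ} :=
    fun x hx y hy h => (hPS.mul_left_cancel rfl hx.2.symm hy.2.symm h).2
  obtain ⟨_, ⟨ν, ⟨hdν, hν⟩, rfl⟩, hnot⟩ :=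
    ((hinf _ (hPS.d_rng μ)).image hinj).exists_notMem_finite hfin
  refine ⟨ν, hdν, hν.symm, fun a ha γ hγ haγ => hnot ?_⟩
  have hdeg : d (mul μ ν) = d μ * egen k i := by rw [hPS.d_mul _ _ hν.symm, hdν]
  obtain ⟨a', hda', ha'⟩ := hPS.exists_isInit_egen (c := mul μ ν) (i := i)
    (by simp [hdeg, hμ, egen])
  obtain rfl : a' = a := hPS.eq_of_isInit (hda'.trans (hA a ha).symm) (hPS.isInit_trans ha' hγ) haγ
  refine Set.mem_biUnion ha ⟨⟨ν, hν.symm, rfl⟩, ha', ?_⟩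
  rw [hdeg, hda']
  exact isLUB2_mul_egen (hPS.d_mem μ) hμ

/-- If every vertex emits infinitely many edges of every degree `e_i`, then every vertex `v` is the
source of an edge having no common extension with any of finitely many given edges of degrees
`e_i`. -/
theorem IsProductSystem.exists_avoiding_generators
    (hPS : IsProductSystem (posCone k) d src rng mul)
    (hFA : FinitelyAligned (posCone k) d src rng mul)
    (hinf : ∀ v, d v = 1 → ∀ i : Fin k, {a : Λ | d a = egen k i ∧ src a = v}.Infinite)
    {v : Λ} (hv : d v = 1) (A : Fin k → Finset Λ) (hA : ∀ i, ∀ a ∈ A i, d a = egen k i)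
    (S : Finset (Fin k)) :
    ∃ μ, src μ = v ∧ (∀ i ∉ S, Multiplicative.toAdd (d μ) i = 0) ∧
      ∀ i ∈ S, ∀ a ∈ A i, ∀ γ, IsInit src rng mul μ γ → ¬ IsInit src rng mul a γ := by
  induction S using Finset.induction_on with
  | empty => exact ⟨v, hPS.src_vertex v hv, by simp [hv], by simp⟩
  | insert i S hi ih =>
    obtain ⟨μ, hsrc, hzero, havoid⟩ := ih
    obtain ⟨ν, hdν, hν, hnew⟩ := hPS.exists_extension_avoiding hFA (fun w hw => hinf w hw i)
      (hzero i hi) (A i) (hA i)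
    refine ⟨mul μ ν, (hPS.src_mul _ _ hν).trans hsrc, fun j hj => ?_, fun j hj a ha γ hγ => ?_⟩
    · rw [Finset.mem_insert, not_or] at hj
      simp [hPS.d_mul _ _ hν, hdν, hzero j hj.2, egen, hj.1]
    · rcases Finset.mem_insert.1 hj with rfl | hj
      · exact hnew a ha γ hγ
      · exact havoid j hj a ha γ (hPS.isInit_trans ⟨ν, hν, rfl⟩ hγ)

/-- If every vertex emits infinitely many edges of every degree `e_i`, then every vertex `v` is the
source of an edge having no minimal common extension with any of finitely many given edges of
nonzero degree. -/
theorem IsProductSystem.exists_MCE_eq_empty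
    (hPS : IsProductSystem (posCone k) d src rng mul)
    (hFA : FinitelyAligned (posCone k) d src rng mul)
    (hinf : ∀ v, d v = 1 → ∀ i : Fin k, {a : Λ | d a = egen k i ∧ src a = v}.Infinite)
    {v : Λ} (hv : d v = 1) (A : Finset Λ) (hA : ∀ a ∈ A, d a ≠ 1) :
    ∃ μ, src μ = v ∧ ∀ a ∈ A, MCE (posCone k) d src rng mul a μ = ∅ := by
  have hhead : ∀ a, ∃ b, d a ≠ 1 → ∃ i, d b = egen k i ∧ IsInit src rng mul b a := by
    intro a
    by_cases ha : d a = 1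
    · exact ⟨a, fun h => absurd ha h⟩
    · obtain ⟨i, hi⟩ := exists_one_le_of_ne_one (hPS.d_mem a) ha
      obtain ⟨b, hb⟩ := hPS.exists_isInit_egen hi
      exact ⟨b, fun _ => ⟨i, hb⟩⟩
  choose head hhead using hhead
  obtain ⟨μ, hsrc, -, hμ⟩ := hPS.exists_avoiding_generators hFA hinf hv
    (fun i => (A.image head).filter fun b => d b = egen k i)
    (fun i b hb => (Finset.mem_filter.1 hb).2) Finset.univ
  refine ⟨μ, hsrc, fun a ha => Set.eq_empty_of_forall_notMem ?_⟩
  rintro γ ⟨haγ, hμγ, -⟩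
  obtain ⟨i, hi, hinit⟩ := hhead a (hA a ha)
  exact hμ i (Finset.mem_univ i) (head a)
    (Finset.mem_filter.2 ⟨Finset.mem_image_of_mem head ha, hi⟩) γ hμγ (hPS.isInit_trans hinit haγ)

end ProductSystem

theorem list_prod_mul_eq_self {M : Type*} [Monoid M] {x : M} {L : List M}
    (h : ∀ y ∈ L, y * x = x) : L.prod * x = x := by
  induction L with
  | nil => simp
  | cons y L ih =>
    rw [List.prod_cons, mul_assoc, ih fun z hz => h z (List.mem_cons_of_mem y hz),
      h y List.mem_cons_self]

section Family

variable {k : ℕ} {Λ : Type*} {d : Λ → Multiplicative (Fin k → ℤ)} {src rng : Λ → Λ}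
  {mul : Λ → Λ → Λ} {B : Type*} [CStarAlgebra B] [PartialOrder B] {t : Λ → B}

/-- A gap projection at the source of `μ` fixes `t_μ` when `μ` has no minimal common extension with
the edges defining it. -/
theorem IsTCKFamily.sub_sum_mul_eq_self {P : Submonoid (Multiplicative (Fin k → ℤ))}
    (hPS : IsProductSystem P d src rng mul) (hT : IsTCKFamily P d src rng mul t)
    {μ : Λ} {F : Finset Λ} (hF : ∀ a ∈ F, MCE P d src rng mul a μ = ∅) :
    (t (src μ) - ∑ a ∈ F, t a * star (t a)) * t μ = t μ := by
  have hsrc : t (src μ) * t μ = t μ := by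
    rw [hT.1.mul_eq _ _ (hPS.rng_vertex _ (hPS.d_src μ)), hPS.src_mul_self]
  have hsum : (∑ a ∈ F, t a * star (t a)) * t μ = 0 := by
    rw [Finset.sum_mul]
    refine Finset.sum_eq_zero fun a ha => ?_
    rw [mul_assoc, hT.2 a μ ∅ (by simp [hF a ha]), Finset.sum_empty, mul_zero]
  rw [sub_mul, hsrc, hsum, sub_zero]

/-- A finite product of gap projections at a vertex `v` is nonzero when every vertex emits
infinitely many edges of every degree `e_i` and every vertex projection is nonzero. -/
theorem IsTCKFamily.list_prod_sub_sum_ne_zero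
    (hPS : IsProductSystem (posCone k) d src rng mul)
    (hFA : FinitelyAligned (posCone k) d src rng mul)
    (hinf : ∀ v, d v = 1 → ∀ i : Fin k, {a : Λ | d a = egen k i ∧ src a = v}.Infinite)
    (hT : IsTCKFamily (posCone k) d src rng mul t) (hnz : ∀ v, d v = 1 → t v ≠ 0)
    {v : Λ} (hv : d v = 1) {ι : Type*} (R : List ι) (F : ι → Finset Λ)
    (hF : ∀ p ∈ R, ∀ a ∈ F p, d a ≠ 1) :
    (R.map fun p => t v - ∑ a ∈ F p, t a * star (t a)).prod ≠ 0 := by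
  obtain ⟨μ, rfl, hμ⟩ := hPS.exists_MCE_eq_empty hFA hinf hv (R.toFinset.biUnion F)
    (by simpa using fun a p hp ha => hF p hp a ha)
  have hfix : (R.map fun p => t (src μ) - ∑ a ∈ F p, t a * star (t a)).prod * t μ = t μ := by
    refine list_prod_mul_eq_self fun y hy => ?_
    obtain ⟨p, hp, rfl⟩ := List.mem_map.1 hy
    exact hT.sub_sum_mul_eq_self hPS fun a ha =>
      hμ a (Finset.mem_biUnion.2 ⟨p, List.mem_toFinset.2 hp, ha⟩)
  intro h0
  rw [h0, zero_mul] at hfix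
  refine hnz _ (hPS.d_rng μ) ?_
  rw [← hT.1.star_mul_self, ← hfix, mul_zero]

end Family

/-- Corollary 8.5 (hypothesis verification): if every vertex receives infinitely many edges of
each degree `e_i` and all vertex projections are nonzero, then every Toeplitz–Cuntz–Krieger
`E`-family satisfies `∏_{m=1}^k (t_v − ∑_{λ∈G_m} t_λ t_λ*) ≠ 0` for all finite
`G_m ⊆ s_{e_m}⁻¹(v)`; in particular condition (†) holds. -/
theorem stmt16 {k : ℕ} {Λ : Type*}
    (d : Λ → Multiplicative (Fin k → ℤ)) (src rng : Λ → Λ) (mul : Λ → Λ → Λ)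
    (hPS : IsProductSystem (posCone k) d src rng mul)
    (hFA : FinitelyAligned (posCone k) d src rng mul)
    (hinf : ∀ v, d v = 1 → ∀ i : Fin k,
      {a : Λ | d a = egen k i ∧ src a = v}.Infinite)
    {B : Type*} [CStarAlgebra B] [PartialOrder B] [StarOrderedRing B]
    (t : Λ → B) (hT : IsTCKFamily (posCone k) d src rng mul t)
    (hnz : ∀ v, d v = 1 → t v ≠ 0) :
    (∀ v, d v = 1 → ∀ Gm : Fin k → Finset Λ,
      (∀ m : Fin k, ∀ a ∈ Gm m, d a = egen k m ∧ src a = v) →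
      (List.ofFn fun m : Fin k =>
        t v - ∑ a ∈ Gm m, t a * star (t a)).prod ≠ 0) ∧
    Dagger (posCone k) d src t := by
  have hegen : ∀ m : Fin k, egen k m ≠ 1 := fun m h => by
    simpa [egen] using congrFun (congrArg Multiplicative.toAdd h) m
  refine ⟨fun v hv Gm hGm => ?_, fun R _ hR v hv Fp hFp => ?_⟩
  · rw [List.ofFn_eq_map]
    exact hT.list_prod_sub_sum_ne_zero hPS hFA hinf hnz hv _ Gm
      fun m _ a ha => (hGm m a ha).1 ▸ hegen m
  · exact hT.list_prod_sub_sum_ne_zero hPS hFA hinf hnz hv R Fp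
      fun p hp a ha => (hFp p hp a ha).1 ▸ (hR p hp).2

end PSG
end
end
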